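/- Let g : ℝ → ℝ be bounded and measurable and let f : ℝ → ℝ be measurable with c·χ_I(x) ≤ f(x) ≤ C·χ_{[−1,0]}(x) for all x, for some constants 0 < c ≤ C < ∞ and some nontrivial subinterval I of [−1, 0]. For each α, λ ∈ ℝ let (u(·,α,λ), v(·,α,λ)) be the solution of −u″ + (g + λ·f)·u = 0 with u(0,α,λ) = sin α and v(0,α,λ) = cos α; let R : ℝ×ℝ×ℝ → (0,∞) and φ : ℝ×ℝ×ℝ → ℝ satisfy u = R·sin(φ), v = R·cos(φ) and φ(0,α,λ) = α, with φ jointly continuous in (x,α,λ). Define D := { (β, α) ∈ ℝ² : φ(−1,α,λ) = β for some λ ∈ ℝ }. Then: (i) for every (β, α) ∈ D there is a unique λ(β,α) ∈ ℝ with φ(−1,α,λ(β,α)) = β; (ii) D is an open subset of ℝ²; (iii) the map (β, α) ↦ λ(β,α) is continuous on D. -/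

import Mathlib

open MeasureTheory

/-! By the polar form, `φ` solves the Prüfer equation `φ' = cos² φ - q sin² φ` with `q = g + λ f`.
For `λ < λ'` the difference `w` of the two angles with `φ(0) = α` satisfies a linear equation
`w' = k w - (λ' - λ) f sin² φ`, so `w(-1) > 0`, because `sin φ` vanishes only on a null set. Hence
`λ ↦ φ(-1, α, λ)` is strictly increasing, and `(α, λ) ↦ (φ(-1, α, λ), α)` is injective, continuous
and, by the intermediate value theorem, open. Its range is `D`, and its inverse yields `λ(β, α)`. -/

open Set Filter Topology Real Interval

section AbsolutelyContinuous

variable {X Y E : Type*} [PseudoMetricSpace X] [PseudoMetricSpace Y] [SeminormedAddCommGroup E]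
  {a b : ℝ}

theorem absolutelyContinuousOnInterval_comp_of_lipschitzOnWith {K : NNReal} {g : X → Y}
    {F : ℝ → X} (hg : LipschitzOnWith K g (F '' uIcc a b))
    (hF : AbsolutelyContinuousOnInterval F a b) :
    AbsolutelyContinuousOnInterval (fun x ↦ g (F x)) a b := by
  have hK : Tendsto (fun E : ℕ × (ℕ → ℝ × ℝ) ↦
      K * ∑ i ∈ Finset.range E.1, dist (F (E.2 i).1) (F (E.2 i).2))
      (AbsolutelyContinuousOnInterval.totalLengthFilter ⊓
        𝓟 (AbsolutelyContinuousOnInterval.disjWithin a b)) (𝓝 0) := by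
    simpa using Tendsto.const_mul (K : ℝ) hF
  refine squeeze_zero' (.of_forall fun E ↦ by positivity) ?_ hK
  filter_upwards [mem_inf_of_right (mem_principal_self _)] with E hE
  rw [Finset.mul_sum]
  gcongr with i hi
  exact hg.dist_le_mul _ (mem_image_of_mem F (hE.1 i hi).1) _ (mem_image_of_mem F (hE.1 i hi).2)

theorem absolutelyContinuousOnInterval_comp_of_locallyLipschitz {g : E → Y} {F : ℝ → E}
    (hg : LocallyLipschitz g) (hF : AbsolutelyContinuousOnInterval F a b) :
    AbsolutelyContinuousOnInterval (fun x ↦ g (F x)) a b := by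
  have hcompact : IsCompact (F '' uIcc a b) := isCompact_uIcc.image_of_continuousOn hF.continuousOn
  obtain ⟨K, hK⟩ := (hg.locallyLipschitzOn (s := F '' uIcc a b)).exists_lipschitzOnWith_of_compact
    hcompact
  exact absolutelyContinuousOnInterval_comp_of_lipschitzOnWith hK hF

end AbsolutelyContinuous

theorem intervalIntegrable_of_locallyIntegrable {E : Type*} [NormedAddCommGroup E] {h : ℝ → E}
    (hh : LocallyIntegrable h volume) (a b : ℝ) : IntervalIntegrable h volume a b :=
  intervalIntegrable_iff.mpr <|
    (hh.integrableOn_isCompact isCompact_uIcc).mono_set uIoc_subset_uIcc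

theorem countable_setOf_eq_and_hasDerivAt_ne_zero {𝕜 E : Type*} [NontriviallyNormedField 𝕜]
    [SecondCountableTopology 𝕜] [NormedAddCommGroup E] [NormedSpace 𝕜 E] (F F' : 𝕜 → E) (c : E) :
    {x | F x = c ∧ HasDerivAt F (F' x) x ∧ F' x ≠ 0}.Countable := by
  refine (HereditarilyLindelofSpace.isLindelof _).countable_of_isDiscrete ?_
  rw [isDiscrete_iff_nhdsNE]
  rintro x ⟨-, hx, hx'⟩
  rw [← disjoint_iff, disjoint_principal_right]
  filter_upwards [hx.eventually_ne (c := c) hx'] with y hy hyS using hy hyS.1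

/-- `F` is locally absolutely continuous with weak derivative `h`, encoded through the fundamental
theorem of calculus. -/
structure HasWeakDeriv (F h : ℝ → ℝ) : Prop where
  locallyIntegrable : LocallyIntegrable h volume
  integral_eq_sub (x y : ℝ) : ∫ t in x..y, h t = F y - F x

namespace HasWeakDeriv

variable {F G h k : ℝ → ℝ}

theorem const_add_integral (hh : LocallyIntegrable h volume) (c a : ℝ) :
    HasWeakDeriv (fun x ↦ c + ∫ t in a..x, h t) h where
  locallyIntegrable := hh
  integral_eq_sub x y := by
    have hI := intervalIntegrable_of_locallyIntegrable hh
    rw [add_sub_add_left_eq_sub, intervalIntegral.integral_interval_sub_left (hI a y) (hI a x)]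

theorem of_hasDerivAt (hF : ∀ x, HasDerivAt F (h x) x) (hh : Continuous h) :
    HasWeakDeriv F h where
  locallyIntegrable := hh.locallyIntegrable
  integral_eq_sub x y := intervalIntegral.integral_eq_sub_of_hasDerivAt (fun t _ ↦ hF t)
    (hh.intervalIntegrable x y)

theorem of_ae_hasDerivAt (hF : ∀ x y, AbsolutelyContinuousOnInterval F x y)
    (hFh : ∀ᵐ x, HasDerivAt F (h x) x) (hh : LocallyIntegrable h volume) :
    HasWeakDeriv F h where
  locallyIntegrable := hh
  integral_eq_sub x y := by
    rw [← (hF x y).integral_deriv_eq_sub]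
    refine intervalIntegral.integral_congr_ae ?_
    filter_upwards [hFh] with t ht _ using ht.deriv.symm

theorem intervalIntegrable (hF : HasWeakDeriv F h) (x y : ℝ) : IntervalIntegrable h volume x y :=
  intervalIntegrable_of_locallyIntegrable hF.locallyIntegrable x y

theorem eq_add_integral (hF : HasWeakDeriv F h) (a : ℝ) :
    F = fun x ↦ F a + ∫ t in a..x, h t := by
  funext x
  rw [hF.integral_eq_sub, add_sub_cancel]

theorem ae_hasDerivAt (hF : HasWeakDeriv F h) : ∀ᵐ x, HasDerivAt F (h x) x := by
  rw [hF.eq_add_integral 0]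
  filter_upwards [_root_.LocallyIntegrable.ae_hasDerivAt_integral hF.locallyIntegrable] with x hx
    using (hx 0).const_add _

theorem ae_eq_imp_eq_zero (hF : HasWeakDeriv F h) (c : ℝ) :
    ∀ᵐ x, F x = c → h x = 0 := by
  filter_upwards [hF.ae_hasDerivAt,
    (countable_setOf_eq_and_hasDerivAt_ne_zero F h c).ae_notMem volume] with x hx hxS hc
  by_contra hne
  exact hxS ⟨hc, hx, hne⟩

theorem absolutelyContinuousOnInterval (hF : HasWeakDeriv F h) (a b : ℝ) :
    AbsolutelyContinuousOnInterval F a b := by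
  rw [hF.eq_add_integral a]
  exact (LipschitzWith.const (F a)).lipschitzOnWith.absolutelyContinuousOnInterval.fun_add
    ((hF.intervalIntegrable a b).absolutelyContinuousOnInterval_intervalIntegral left_mem_uIcc)

theorem continuous (hF : HasWeakDeriv F h) : Continuous F := by
  rw [hF.eq_add_integral 0]
  exact continuous_const.add (intervalIntegral.continuous_primitive hF.intervalIntegrable 0)

theorem sub (hF : HasWeakDeriv F h) (hG : HasWeakDeriv G k) :
    HasWeakDeriv (fun x ↦ F x - G x) (fun x ↦ h x - k x) where
  locallyIntegrable := hF.locallyIntegrable.sub hG.locallyIntegrable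
  integral_eq_sub x y := by
    rw [intervalIntegral.integral_sub (hF.intervalIntegrable x y) (hG.intervalIntegrable x y),
      hF.integral_eq_sub, hG.integral_eq_sub]
    ring

theorem mul (hF : HasWeakDeriv F h) (hG : HasWeakDeriv G k) :
    HasWeakDeriv (fun x ↦ F x * G x) (fun x ↦ h x * G x + F x * k x) := by
  refine of_ae_hasDerivAt (fun x y ↦ (hF.absolutelyContinuousOnInterval x y).fun_mul
    (hG.absolutelyContinuousOnInterval x y)) ?_
    ((hF.locallyIntegrable.mul_continuous hG.continuous).add
      (hG.locallyIntegrable.continuous_mul hF.continuous))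
  filter_upwards [hF.ae_hasDerivAt, hG.ae_hasDerivAt] with x hFx hGx using hFx.mul hGx

theorem comp {g : ℝ → ℝ} (hg : ContDiff ℝ 1 g) (hF : HasWeakDeriv F h) :
    HasWeakDeriv (fun x ↦ g (F x)) (fun x ↦ deriv g (F x) * h x) := by
  refine of_ae_hasDerivAt (fun x y ↦ absolutelyContinuousOnInterval_comp_of_locallyLipschitz
    hg.locallyLipschitz (hF.absolutelyContinuousOnInterval x y)) ?_
    (hF.locallyIntegrable.continuous_mul ((hg.continuous_deriv le_rfl).comp hF.continuous))
  filter_upwards [hF.ae_hasDerivAt] with x hx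
  exact ((hg.differentiable one_ne_zero).differentiableAt.hasDerivAt).comp x hx

theorem exp_neg_integral_mul (hk : LocallyIntegrable k volume)
    (hF : HasWeakDeriv F fun x ↦ k x * F x + h x) (a : ℝ) :
    HasWeakDeriv (fun x ↦ exp (-∫ t in a..x, k t) * F x)
      (fun x ↦ exp (-∫ t in a..x, k t) * h x) := by
  have hexp : ContDiff ℝ 1 fun s : ℝ ↦ exp (-s) := by fun_prop
  have hK : HasWeakDeriv (fun x ↦ ∫ t in a..x, k t) k := by
    simpa only [zero_add] using const_add_integral hk 0 a
  convert (hK.comp hexp).mul hF using 2 with x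
  simp only [deriv_comp_neg, Real.deriv_exp, neg_mul]
  ring

theorem eq_zero_of_eq_mul_self (hk : LocallyIntegrable k volume)
    (hF : HasWeakDeriv F fun x ↦ k x * F x) {a : ℝ} (ha : F a = 0) (x : ℝ) : F x = 0 := by
  have hexp := (exp_neg_integral_mul (h := 0) hk (by simpa using hF) a).integral_eq_sub a x
  simpa [ha, (exp_pos _).ne', eq_comm] using hexp

theorem pos_left_of_eq_mul_self_add (hk : LocallyIntegrable k volume)
    (hF : HasWeakDeriv F fun x ↦ k x * F x + h x) {a b : ℝ} (hb : 0 ≤ F b)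
    (hh : h ≤ᵐ[volume.restrict (Ioc a b)] 0)
    (hh_support : 0 < volume (Function.support h ∩ Ioc a b)) : 0 < F a := by
  have hab : a < b := by
    by_contra! hba
    simp [Ioc_eq_empty_of_le hba] at hh_support
  have hexp := hF.exp_neg_integral_mul hk b
  set J : ℝ → ℝ := fun x ↦ exp (-∫ t in b..x, k t) * h x with hJ
  have hJ_nonneg : ∀ᵐ x ∂volume.restrict (Ι a b), 0 ≤ -J x := by
    rw [uIoc_of_le hab.le]
    filter_upwards [hh] with x hx
    exact neg_nonneg.2 (mul_nonpos_of_nonneg_of_nonpos (exp_pos _).le hx)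
  have hJ_support : Function.support (fun x ↦ -J x) = Function.support h := by
    ext x
    simp [hJ]
  have hJ_int : 0 < ∫ x in a..b, -J x :=
    (intervalIntegral.integral_pos_iff_support_of_nonneg_ae' hJ_nonneg
      (hexp.intervalIntegrable a b).neg).2 ⟨hab, hJ_support ▸ hh_support⟩
  rw [intervalIntegral.integral_neg, hexp.integral_eq_sub] at hJ_int
  simp only [intervalIntegral.integral_same, neg_zero, exp_zero, one_mul] at hJ_int
  exact pos_of_mul_pos_right (by linarith) (exp_pos (-∫ t in b..a, k t)).le

end HasWeakDeriv

/-- `u` solves the Schrödinger equation `-u'' + q u = 0` with derivative `v`, where the equation for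
`v` is imposed in integrated form so that `q` need only be locally integrable. -/
structure IsSchroedingerSolution (q u v : ℝ → ℝ) : Prop where
  hasDerivAt (x : ℝ) : HasDerivAt u (v x) x
  eq_add_integral (x y : ℝ) : v x = v y + ∫ t in y..x, q t * u t

/-- `φ` solves the Prüfer equation `φ' = cos² φ - q sin² φ`, the equation satisfied by the phase of
a solution of `-u'' + q u = 0` in polar form `u = R sin φ`, `u' = R cos φ`. -/
def IsPrueferAngle (q φ : ℝ → ℝ) : Prop :=
  HasWeakDeriv φ fun x ↦ cos (φ x) ^ 2 - q x * sin (φ x) ^ 2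

theorem eq_of_continuous_of_sin_sub_eq_zero {X : Type*} [TopologicalSpace X] [PreconnectedSpace X]
    {φ ψ : X → ℝ} (hφ : Continuous φ) (hψ : Continuous ψ)
    (hsin : ∀ x, sin (φ x - ψ x) = 0) {a : X} (ha : φ a = ψ a) : φ = ψ := by
  have hzeros : {y : ℝ | sin y = 0}.Countable := by
    have : {y : ℝ | sin y = 0} = range fun n : ℤ ↦ n * π := by
      ext y
      simp [sin_eq_zero_iff]
    exact this ▸ countable_range _
  have hsub : (range fun x ↦ φ x - ψ x).Subsingleton :=
    hzeros.isTotallyDisconnected _ (range_subset_iff.2 hsin)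
      (isPreconnected_range (hφ.sub hψ))
  funext x
  have hx : φ x - ψ x = φ a - ψ a := hsub (mem_range_self x) (mem_range_self a)
  rwa [ha, sub_self, sub_eq_zero] at hx

namespace IsSchroedingerSolution

variable {q u v R φ : ℝ → ℝ}

theorem hasWeakDeriv_deriv (hq : LocallyIntegrable q volume) (h : IsSchroedingerSolution q u v) :
    HasWeakDeriv v fun x ↦ q x * u x where
  locallyIntegrable := hq.mul_continuous
    (continuous_iff_continuousAt.2 fun x ↦ (h.hasDerivAt x).continuousAt)
  integral_eq_sub x y := eq_sub_of_add_eq' (h.eq_add_integral y x).symm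

theorem hasWeakDeriv (hq : LocallyIntegrable q volume) (h : IsSchroedingerSolution q u v) :
    HasWeakDeriv u v :=
  .of_hasDerivAt h.hasDerivAt (h.hasWeakDeriv_deriv hq).continuous

theorem isPrueferAngle (hq : LocallyIntegrable q volume) (h : IsSchroedingerSolution q u v)
    (hφ : Continuous φ) (hR : ∀ x, R x ≠ 0) (hu : ∀ x, u x = R x * sin (φ x))
    (hv : ∀ x, v x = R x * cos (φ x)) : IsPrueferAngle q φ := by
  -- Let `ψ` integrate the right-hand side of the Prüfer equation for `φ`. Then `R sin (φ - ψ)`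
  -- solves a homogeneous linear equation and vanishes at `0`.
  set θ : ℝ → ℝ := fun x ↦ cos (φ x) ^ 2 - q x * sin (φ x) ^ 2 with hθ
  have hθ_int : LocallyIntegrable θ volume :=
    (by fun_prop : Continuous fun x ↦ cos (φ x) ^ 2).locallyIntegrable.sub
      (hq.mul_continuous (by fun_prop))
  set ψ : ℝ → ℝ := fun x ↦ φ 0 + ∫ t in 0..x, θ t
  have hψ : HasWeakDeriv ψ θ := .const_add_integral hθ_int (φ 0) 0
  set U : ℝ → ℝ := fun x ↦ u x * cos (ψ x) - v x * sin (ψ x) with hU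
  have hU_eq x : U x = R x * sin (φ x - ψ x) := by
    simp only [hU, hu, hv, sin_sub]
    ring
  have hU_deriv : HasWeakDeriv U fun x ↦ (1 + q x) * (sin (φ x) * cos (φ x)) * U x := by
    convert ((h.hasWeakDeriv hq).mul (hψ.comp contDiff_cos)).sub
      ((h.hasWeakDeriv_deriv hq).mul (hψ.comp contDiff_sin)) using 2 with x
    simp only [hU, hθ, hu, hv, Real.deriv_cos, Real.deriv_sin]
    linear_combination R x * (cos (φ x) * cos (ψ x) - q x * sin (φ x) * sin (ψ x)) *
      sin_sq_add_cos_sq (φ x)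
  have hk : LocallyIntegrable (fun x ↦ (1 + q x) * (sin (φ x) * cos (φ x))) volume :=
    ((locallyIntegrable_const 1).add hq).mul_continuous (by fun_prop)
  have hsin x : sin (φ x - ψ x) = 0 := by
    have hUx := hU_deriv.eq_zero_of_eq_mul_self hk (a := 0) (by simp [hU_eq, ψ]) x
    exact (mul_eq_zero.1 ((hU_eq x).symm.trans hUx)).resolve_left (hR x)
  have hφψ : φ = ψ := eq_of_continuous_of_sin_sub_eq_zero hφ hψ.continuous hsin
    (a := 0) (by simp [ψ])
  rw [IsPrueferAngle]
  nth_rw 1 [hφψ]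
  exact hψ

end IsSchroedingerSolution

theorem sinc_mul_self (x : ℝ) : sinc x * x = sin x := by
  rcases eq_or_ne x 0 with rfl | hx
  · simp
  · rw [sinc_of_ne_zero hx, div_mul_cancel₀ _ hx]

theorem sin_sq_sub_sin_sq (x y : ℝ) : sin x ^ 2 - sin y ^ 2 = sin (x + y) * sin (x - y) := by
  rw [sin_add, sin_sub]
  linear_combination sin y ^ 2 * sin_sq_add_cos_sq x - sin x ^ 2 * sin_sq_add_cos_sq y

namespace IsPrueferAngle

variable {q q₁ q₂ φ φ₁ φ₂ : ℝ → ℝ} {a b : ℝ}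

theorem ae_sin_ne_zero (h : IsPrueferAngle q φ) : ∀ᵐ x, sin (φ x) ≠ 0 := by
  filter_upwards [(HasWeakDeriv.comp contDiff_sin h).ae_eq_imp_eq_zero 0] with x hx hsin
  have hcos : cos (φ x) = 0 := by simpa [hsin] using hx hsin
  simpa [hsin, hcos] using sin_sq_add_cos_sq (φ x)

-- `sin² φ₂ - sin² φ₁ = sin (φ₂ + φ₁) sin (φ₂ - φ₁)`, and `sinc` makes the last factor a continuous
-- multiple of `φ₂ - φ₁`, so that the equation for the difference is linear.
theorem hasWeakDeriv_sub (h₁ : IsPrueferAngle q₁ φ₁) (h₂ : IsPrueferAngle q₂ φ₂) :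
    HasWeakDeriv (fun x ↦ φ₂ x - φ₁ x) fun x ↦
      -((1 + q₁ x) * (sin (φ₂ x + φ₁ x) * sinc (φ₂ x - φ₁ x))) * (φ₂ x - φ₁ x) +
        -((q₂ x - q₁ x) * sin (φ₂ x) ^ 2) := by
  convert HasWeakDeriv.sub h₂ h₁ using 2 with x
  linear_combination -(1 + q₁ x) * sin (φ₂ x + φ₁ x) * sinc_mul_self (φ₂ x - φ₁ x)
    + (1 + q₁ x) * sin_sq_sub_sin_sq (φ₂ x) (φ₁ x)
    - sin_sq_add_cos_sq (φ₂ x) + sin_sq_add_cos_sq (φ₁ x)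

theorem lt_left_of_ae_le (hq₁ : LocallyIntegrable q₁ volume) (h₁ : IsPrueferAngle q₁ φ₁)
    (h₂ : IsPrueferAngle q₂ φ₂) (hb : φ₁ b ≤ φ₂ b) (hle : q₁ ≤ᵐ[volume.restrict (Ioc a b)] q₂)
    (hlt : 0 < volume ({x | q₁ x < q₂ x} ∩ Ioc a b)) : φ₁ a < φ₂ a := by
  have hφ₁ : Continuous φ₁ := HasWeakDeriv.continuous h₁
  have hφ₂ : Continuous φ₂ := HasWeakDeriv.continuous h₂
  have hk : LocallyIntegrable
      (fun x ↦ -((1 + q₁ x) * (sin (φ₂ x + φ₁ x) * sinc (φ₂ x - φ₁ x)))) volume :=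
    (((locallyIntegrable_const 1).add hq₁).mul_continuous (by fun_prop)).neg
  refine sub_pos.1
    ((hasWeakDeriv_sub h₁ h₂).pos_left_of_eq_mul_self_add hk (sub_nonneg.2 hb) ?_ ?_)
  · filter_upwards [hle] with x hx
    exact neg_nonpos.2 (mul_nonneg (sub_nonneg.2 hx) (sq_nonneg _))
  · refine hlt.trans_le (measure_mono_ae ?_)
    filter_upwards [h₂.ae_sin_ne_zero] with x hsin ⟨(hx : q₁ x < q₂ x), hxab⟩
    exact ⟨by simp [hsin, (sub_pos.2 hx).ne'], hxab⟩

theorem strictMono_coupling {g f : ℝ → ℝ} {Φ : ℝ → ℝ → ℝ} (hg : LocallyIntegrable g volume)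
    (hf : LocallyIntegrable f volume) (hf_nonneg : 0 ≤ᵐ[volume.restrict (Ioc a b)] f)
    (hf_support : 0 < volume (Function.support f ∩ Ioc a b))
    (hΦ : ∀ lam, IsPrueferAngle (fun x ↦ g x + lam * f x) (Φ lam))
    (hb : ∀ lam lam', Φ lam b = Φ lam' b) : StrictMono fun lam ↦ Φ lam a := by
  intro lam lam' hlam
  have hle : (fun x ↦ g x + lam * f x) ≤ᵐ[volume.restrict (Ioc a b)]
      fun x ↦ g x + lam' * f x := by
    filter_upwards [hf_nonneg] with x (hx : 0 ≤ f x)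
    gcongr
  refine (hΦ lam).lt_left_of_ae_le (hg.add (hf.smul lam)) (hΦ lam') (hb lam lam').le hle
    (hf_support.trans_le ?_)
  rw [← Measure.restrict_apply' measurableSet_Ioc, ← Measure.restrict_apply' measurableSet_Ioc]
  refine measure_mono_ae ?_
  filter_upwards [hf_nonneg] with x (hx : 0 ≤ f x) (hfx : f x ≠ 0)
  have hpos : 0 < f x := hx.lt_of_ne' hfx
  exact (add_lt_add_iff_left _).2 (mul_lt_mul_of_pos_right hlam hpos)

end IsPrueferAngle

section StrictMonoFamily

variable {X L Y : Type*} [TopologicalSpace X] [ConditionallyCompleteLinearOrder L]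
  [TopologicalSpace L] [OrderTopology L] [DenselyOrdered L] [NoMinOrder L] [NoMaxOrder L]
  [LinearOrder Y] [TopologicalSpace Y] [OrderClosedTopology Y] {G : X → L → Y}

theorem isOpenEmbedding_prodMk_of_strictMono (hG : Continuous fun p : X × L ↦ G p.1 p.2)
    (hmono : ∀ a, StrictMono (G a)) :
    IsOpenEmbedding fun p : X × L ↦ (G p.1 p.2, p.1) := by
  refine .of_continuous_injective_isOpenMap (hG.prodMk continuous_fst) ?_ ?_
  · rintro ⟨a, l⟩ ⟨a', l'⟩ h
    obtain ⟨hl, rfl⟩ : G a l = G a' l' ∧ a = a' := Prod.mk.inj h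
    rw [(hmono a).injective hl]
  rw [isOpenMap_iff_nhds_le]
  rintro ⟨a, l⟩ S hS
  rw [mem_map, nhds_prod_eq, mem_prod_iff] at hS
  obtain ⟨V, hV, W, hW, hVW⟩ := hS
  obtain ⟨l₁, l₂, -, hl, hlW⟩ := exists_Icc_mem_subset_of_mem_nhds hW
  obtain ⟨hl₁, hl₂⟩ := Icc_mem_nhds_iff.1 hl
  have hG_snd (m : L) : Continuous fun p : Y × X ↦ G p.2 m :=
    hG.comp (continuous_snd.prodMk continuous_const)
  have hlower : ∀ᶠ p : Y × X in 𝓝 (G a l, a), G p.2 l₁ < p.1 :=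
    (hG_snd l₁).continuousAt.eventually_lt continuousAt_fst (hmono a hl₁)
  have hupper : ∀ᶠ p : Y × X in 𝓝 (G a l, a), p.1 < G p.2 l₂ :=
    continuousAt_fst.eventually_lt (hG_snd l₂).continuousAt (hmono a hl₂)
  filter_upwards [hlower, hupper, continuousAt_snd.preimage_mem_nhds hV] with ⟨y, a'⟩ h₁ h₂ ha'
  obtain ⟨l', hl', rfl⟩ := intermediate_value_Icc (hl₁.trans hl₂).le
    (hG.comp (Continuous.prodMk_right a')).continuousOn ⟨h₁.le, h₂.le⟩
  exact hVW ⟨ha', hlW hl'⟩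

theorem existsUnique_isOpen_continuousOn_of_strictMono [Nonempty X] [Nonempty L]
    (hG : Continuous fun p : X × L ↦ G p.1 p.2) (hmono : ∀ a, StrictMono (G a)) :
    (∀ p ∈ {p : Y × X | ∃ l, G p.2 l = p.1}, ∃! l, G p.2 l = p.1) ∧
      IsOpen {p : Y × X | ∃ l, G p.2 l = p.1} ∧
      ∃ Λ : Y × X → L, ContinuousOn Λ {p : Y × X | ∃ l, G p.2 l = p.1} ∧
        ∀ p ∈ {p : Y × X | ∃ l, G p.2 l = p.1}, G p.2 (Λ p) = p.1 := by
  have hemb := isOpenEmbedding_prodMk_of_strictMono hG hmono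
  have hrange : {p : Y × X | ∃ l, G p.2 l = p.1} = range fun p : X × L ↦ (G p.1 p.2, p.1) := by
    ext ⟨y, a⟩
    simp
  refine ⟨fun p ⟨l, hl⟩ ↦ ⟨l, hl, fun l' hl' ↦ (hmono p.2).injective (hl'.trans hl.symm)⟩,
    hrange ▸ hemb.isOpen_range, fun p ↦ (hemb.toOpenPartialHomeomorph.symm p).2, ?_, ?_⟩
  · rw [hrange, ← image_univ]
    exact continuous_snd.comp_continuousOn hemb.toOpenPartialHomeomorph.continuousOn_symm
  · rintro ⟨y, a⟩ ⟨l, rfl : G a l = y⟩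
    exact congrArg (fun p : X × L ↦ G a p.2) (hemb.toOpenPartialHomeomorph_left_inv (x := (a, l)))

end StrictMonoFamily

theorem locallyIntegrable_of_norm_le {X E : Type*} [TopologicalSpace X] [MeasurableSpace X]
    [NormedAddCommGroup E] {μ : Measure X} [IsLocallyFiniteMeasure μ] {h : X → E} {C : ℝ}
    (hm : AEStronglyMeasurable h μ) (hC : ∀ x, ‖h x‖ ≤ C) : LocallyIntegrable h μ :=
  (memLp_top_of_bound hm C (ae_of_all _ hC)).locallyIntegrable le_top

theorem volume_support_inter_pos_of_indicator_le {f : ℝ → ℝ} {c a b : ℝ} {s : Set ℝ} (hc : 0 < c)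
    (hab : a < b) (hs : Ioc a b ⊆ s) (hf : ∀ x, (Icc a b).indicator (fun _ ↦ c) x ≤ f x) :
    0 < volume (Function.support f ∩ s) := by
  have hIoc : 0 < volume (Ioc a b) := by simpa using hab
  refine hIoc.trans_le (measure_mono fun x hx ↦ ⟨?_, hs hx⟩)
  exact (hc.trans_le (by simpa [Ioc_subset_Icc_self hx] using hf x)).ne'

theorem coupling_constant_unique_open_continuous_general {g f : ℝ → ℝ}
    (hg : LocallyIntegrable g volume) (hf : LocallyIntegrable f volume)
    (hf_nonneg : 0 ≤ᵐ[volume.restrict (Ioc (-1) 0)] f)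
    (hf_support : 0 < volume (Function.support f ∩ Ioc (-1) 0))
    {u v R φ : ℝ → ℝ → ℝ → ℝ}
    (huv : ∀ α lam, IsSchroedingerSolution (fun x ↦ g x + lam * f x)
      (fun x ↦ u x α lam) (fun x ↦ v x α lam))
    (hR : ∀ x α lam, R x α lam ≠ 0)
    (hu : ∀ x α lam, u x α lam = R x α lam * sin (φ x α lam))
    (hv : ∀ x α lam, v x α lam = R x α lam * cos (φ x α lam))
    (hφ0 : ∀ α lam, φ 0 α lam = α)
    (hφ : Continuous fun p : ℝ × ℝ × ℝ ↦ φ p.1 p.2.1 p.2.2) :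
    (∀ p ∈ {p : ℝ × ℝ | ∃ lam, φ (-1) p.2 lam = p.1}, ∃! lam, φ (-1) p.2 lam = p.1) ∧
      IsOpen {p : ℝ × ℝ | ∃ lam, φ (-1) p.2 lam = p.1} ∧
      ∃ Λ : ℝ × ℝ → ℝ, ContinuousOn Λ {p : ℝ × ℝ | ∃ lam, φ (-1) p.2 lam = p.1} ∧
        ∀ p ∈ {p : ℝ × ℝ | ∃ lam, φ (-1) p.2 lam = p.1}, φ (-1) p.2 (Λ p) = p.1 := by
  have hangle α lam : IsPrueferAngle (fun x ↦ g x + lam * f x) (fun x ↦ φ x α lam) :=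
    (huv α lam).isPrueferAngle (hg.add (hf.smul lam)) (by fun_prop)
      (fun x ↦ hR x α lam) (fun x ↦ hu x α lam) (fun x ↦ hv x α lam)
  have hmono α : StrictMono (φ (-1) α) :=
    IsPrueferAngle.strictMono_coupling hg hf hf_nonneg hf_support (hangle α)
      fun lam lam' ↦ (hφ0 α lam).trans (hφ0 α lam').symm
  exact existsUnique_isOpen_continuousOn_of_strictMono (by fun_prop) hmono

/-- On `D = {(β,α) : β = φ(-1,α,λ) for some λ}` the coupling constant `λ(β,α)` is
uniquely determined, `D` is open, and `λ(·,·)` is continuous on `D`. -/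
theorem coupling_constant_unique_open_continuous (g f : ℝ → ℝ)
    (hgm : Measurable g) (hgb : ∃ Cg : ℝ, ∀ x : ℝ, |g x| ≤ Cg)
    (hfm : Measurable f) (c C : ℝ) (hc : 0 < c) (hcC : c ≤ C)
    (a b : ℝ) (ha : -1 ≤ a) (hab : a < b) (hb : b ≤ 0)
    (hfl : ∀ x : ℝ, Set.indicator (Set.Icc a b) (fun _ => c) x ≤ f x)
    (hfu : ∀ x : ℝ, f x ≤ Set.indicator (Set.Icc (-1 : ℝ) 0) (fun _ => C) x)
    (u v R φ : ℝ → ℝ → ℝ → ℝ)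
    (hu : ∀ (α lam : ℝ) (x : ℝ), HasDerivAt (fun s => u s α lam) (v x α lam) x)
    (hv : ∀ (α lam : ℝ) (x y : ℝ),
      v x α lam = v y α lam + ∫ t in y..x, (g t + lam * f t) * u t α lam)
    (hu0 : ∀ α lam : ℝ, u 0 α lam = Real.sin α)
    (hv0 : ∀ α lam : ℝ, v 0 α lam = Real.cos α)
    (hR : ∀ x α lam : ℝ, 0 < R x α lam)
    (huR : ∀ x α lam : ℝ, u x α lam = R x α lam * Real.sin (φ x α lam))
    (hvR : ∀ x α lam : ℝ, v x α lam = R x α lam * Real.cos (φ x α lam))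
    (hφ0 : ∀ α lam : ℝ, φ 0 α lam = α)
    (hφcont : Continuous fun p : ℝ × ℝ × ℝ => φ p.1 p.2.1 p.2.2) :
    (∀ p : ℝ × ℝ, p ∈ {p : ℝ × ℝ | ∃ lam : ℝ, φ (-1) p.2 lam = p.1} →
      ∃! lam : ℝ, φ (-1) p.2 lam = p.1) ∧
    IsOpen {p : ℝ × ℝ | ∃ lam : ℝ, φ (-1) p.2 lam = p.1} ∧
    ∃ Λ : ℝ × ℝ → ℝ,
      ContinuousOn Λ {p : ℝ × ℝ | ∃ lam : ℝ, φ (-1) p.2 lam = p.1} ∧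
      ∀ p ∈ {p : ℝ × ℝ | ∃ lam : ℝ, φ (-1) p.2 lam = p.1},
        φ (-1) p.2 (Λ p) = p.1 := by
  obtain ⟨Cg, hgb⟩ := hgb
  have hf_nonneg x : 0 ≤ f x := (indicator_nonneg (fun _ _ ↦ hc.le) x).trans (hfl x)
  have hf_le x : f x ≤ C := (hfu x).trans (indicator_le_self' (fun _ _ ↦ hc.le.trans hcC) x)
  exact coupling_constant_unique_open_continuous_general
    (locallyIntegrable_of_norm_le hgm.aestronglyMeasurable hgb)
    (locallyIntegrable_of_norm_le hfm.aestronglyMeasurable fun x ↦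
      (norm_of_nonneg (hf_nonneg x)).trans_le (hf_le x))
    (ae_of_all _ hf_nonneg)
    (volume_support_inter_pos_of_indicator_le hc hab (Ioc_subset_Ioc ha hb) hfl)
    (fun α lam ↦ ⟨hu α lam, hv α lam⟩) (fun x α lam ↦ (hR x α lam).ne') huR hvR hφ0 hφcont
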